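/- arXiv:2004.07344 — 6 statements merged into one kernel-verified Lean document; each statement's English description precedes it below -/
import Mathlib

section
/- Let ρ, K > 0, D ≥ 0, ε ≥ 0 and λ > 0 be real numbers, set η = 1 + ε/λ², and assume K/(ρε + ρλ²) − D²/(4ρ²λ⁴) > 0. Let ω > 0 and γ ∈ ℝ. Then the Kramers–Kronig relations ρ η (ω² − γ²) = K/λ² − D η γ/λ² and 2 ρ γ = D/λ² hold if and only if γ = D/(2ρλ²) and ω = sqrt( K/(ρε + ρλ²) − D²/(4ρ²λ⁴) ); in that case the phase velocity v = ωλ satisfies v = sqrt( K/(ρ(1 + ε/λ²)) − D²/(4ρ²λ²) ). -/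
/-- Under the positivity assumption, the Kramers–Kronig relations
hold iff `γ = D/(2ρλ²)` and `ω = sqrt(K/(ρε + ρλ²) − D²/(4ρ²λ⁴))`; in that case the
phase velocity `v = ωλ` equals `sqrt(K/(ρ(1 + ε/λ²)) − D²/(4ρ²λ²))`. -/
theorem stmt8 (ρ K D ε lam η ω γ : ℝ)
    (hρ : 0 < ρ) (hK : 0 < K) (hD : 0 ≤ D) (hε : 0 ≤ ε) (hlam : 0 < lam)
    (hη : η = 1 + ε / lam ^ 2)
    (hpos : 0 < K / (ρ * ε + ρ * lam ^ 2) - D ^ 2 / (4 * ρ ^ 2 * lam ^ 4))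
    (hω : 0 < ω) :
    ((ρ * η * (ω ^ 2 - γ ^ 2) = K / lam ^ 2 - D * η * γ / lam ^ 2
        ∧ 2 * ρ * γ = D / lam ^ 2)
      ↔ (γ = D / (2 * ρ * lam ^ 2)
        ∧ ω = Real.sqrt (K / (ρ * ε + ρ * lam ^ 2) - D ^ 2 / (4 * ρ ^ 2 * lam ^ 4))))
    ∧ ((ρ * η * (ω ^ 2 - γ ^ 2) = K / lam ^ 2 - D * η * γ / lam ^ 2
        ∧ 2 * ρ * γ = D / lam ^ 2)
      → ω * lam = Real.sqrt (K / (ρ * (1 + ε / lam ^ 2)) - D ^ 2 / (4 * ρ ^ 2 * lam ^ 2))) := by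
  have hl : lam ≠ 0 := hlam.ne'
  have hr : ρ ≠ 0 := hρ.ne'
  have hs : lam ^ 2 + ε ≠ 0 := by positivity
  have hP : ρ * ε + ρ * lam ^ 2 ≠ 0 := by positivity
  have hηpos : 0 < η := by rw [hη]; positivity
  have hη0 : ρ * η ≠ 0 := by positivity
  have hPe : ρ * ε + ρ * lam ^ 2 = ρ * η * lam ^ 2 := by
    rw [hη]; field_simp; ring
  have hg : 2 * ρ * γ = D / lam ^ 2 ↔ γ = D / (2 * ρ * lam ^ 2) := by
    constructor
    · intro h
      field_simp at h ⊢
      linarith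
    · intro h
      rw [h]; field_simp
  have key : γ = D / (2 * ρ * lam ^ 2) →
      ρ * η * (ω ^ 2 - γ ^ 2) - (K / lam ^ 2 - D * η * γ / lam ^ 2) = ρ * η *
        (ω ^ 2 - (K / (ρ * ε + ρ * lam ^ 2) - D ^ 2 / (4 * ρ ^ 2 * lam ^ 4))) := by
    intro h
    have hη1 : η ≠ 0 := hηpos.ne'
    rw [hPe, h]
    field_simp
    ring
  have main : (ρ * η * (ω ^ 2 - γ ^ 2) = K / lam ^ 2 - D * η * γ / lam ^ 2
        ∧ 2 * ρ * γ = D / lam ^ 2)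
      ↔ (γ = D / (2 * ρ * lam ^ 2)
        ∧ ω = Real.sqrt (K / (ρ * ε + ρ * lam ^ 2) - D ^ 2 / (4 * ρ ^ 2 * lam ^ 4))) := by
    rw [hg]
    constructor
    · rintro ⟨h1, h2⟩
      refine ⟨h2, ?_⟩
      have h3 := key h2
      rw [sub_eq_zero.mpr h1] at h3
      have h4 := (mul_eq_zero.mp h3.symm).resolve_left hη0
      rw [← sub_eq_zero.mp h4, Real.sqrt_sq hω.le]
    · rintro ⟨h2, h5⟩
      refine ⟨?_, h2⟩
      have h3 := key h2
      have h6 := Real.sq_sqrt hpos.le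
      rw [← h5] at h6
      rw [h6, sub_self, mul_zero] at h3
      rw [h6]
      exact sub_eq_zero.mp h3
  refine ⟨main, fun h => ?_⟩
  obtain ⟨-, h5⟩ := main.mp h
  have h6 := Real.sq_sqrt hpos.le
  rw [← h5] at h6
  have h7 : K / (ρ * (1 + ε / lam ^ 2)) - D ^ 2 / (4 * ρ ^ 2 * lam ^ 2) = (ω * lam) ^ 2 := by
    have hη1 : η ≠ 0 := hηpos.ne'
    rw [mul_pow, h6, ← hη, hPe]
    field_simp
  rw [h7, Real.sqrt_sq (by positivity)]
end

section
/- Let ρ, K > 0 and ε ≥ 0, D ≥ 0 with ε + D > 0. Then the function λ ↦ K/(ρ(1 + ε/λ²)) − D²/(4ρ²λ²) is strictly increasing on the interval (0, ∞). (Hence the wave speed v(λ) = sqrt( K/(ρ(1+ε/λ²)) − D²/(4ρ²λ²) ) exhibits normal dispersion: longer waves propagate faster, wherever the expression under the square root is positive.) -/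
/-- For `ρ, K > 0`, `ε, D ≥ 0` with `ε + D > 0`, the squared phase
velocity `λ ↦ K/(ρ(1 + ε/λ²)) − D²/(4ρ²λ²)` is strictly increasing on `(0, ∞)`
(normal dispersion). -/
theorem stmt9 (ρ K ε D : ℝ) (hρ : 0 < ρ) (hK : 0 < K) (hε : 0 ≤ ε) (hD : 0 ≤ D)
    (hεD : 0 < ε + D) :
    StrictMonoOn (fun lam : ℝ =>
      K / (ρ * (1 + ε / lam ^ 2)) - D ^ 2 / (4 * ρ ^ 2 * lam ^ 2)) (Set.Ioi 0) := by
  intro a ha b hb hab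
  have ha : 0 < a := ha
  have hb : 0 < b := hb
  have hsq : a ^ 2 < b ^ 2 := by gcongr
  have h1 : K / (ρ * (1 + ε / a ^ 2)) ≤ K / (ρ * (1 + ε / b ^ 2)) := by gcongr
  have h2 : D ^ 2 / (4 * ρ ^ 2 * b ^ 2) ≤ D ^ 2 / (4 * ρ ^ 2 * a ^ 2) := by gcongr
  show K / (ρ * (1 + ε / a ^ 2)) - D ^ 2 / (4 * ρ ^ 2 * a ^ 2)
    < K / (ρ * (1 + ε / b ^ 2)) - D ^ 2 / (4 * ρ ^ 2 * b ^ 2)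
  rcases hε.eq_or_lt with h | h
  · have hD' : 0 < D := by linarith
    have h3 : D ^ 2 / (4 * ρ ^ 2 * b ^ 2) < D ^ 2 / (4 * ρ ^ 2 * a ^ 2) := by gcongr
    linarith
  · have h3 : K / (ρ * (1 + ε / a ^ 2)) < K / (ρ * (1 + ε / b ^ 2)) := by gcongr
    linarith
end

section
/- Let ρ, K, D > 0 and ε ≥ 0 be real numbers. Then there exists a unique λ_c > 0 such that 4 ρ K λ_c⁴ − D² λ_c² − ε D² = 0; moreover, for every λ > 0 one has K/(ρ(1 + ε/λ²)) − D²/(4ρ²λ²) > 0 if and only if λ > λ_c. (Thus waves of length λ ≤ λ_c cannot propagate, while waves of length λ > λ_c have a well-defined positive speed.) -/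
/-- For `ρ, K, D > 0` and `ε ≥ 0` there is a unique `λ_c > 0` with
`4ρKλ_c⁴ − D²λ_c² − εD² = 0`, and for every `λ > 0` the squared phase velocity
`K/(ρ(1 + ε/λ²)) − D²/(4ρ²λ²)` is positive iff `λ > λ_c`. -/
theorem stmt10 (ρ K D ε : ℝ) (hρ : 0 < ρ) (hK : 0 < K) (hD : 0 < D) (hε : 0 ≤ ε) :
    ∃ lamc : ℝ, (0 < lamc ∧ 4 * ρ * K * lamc ^ 4 - D ^ 2 * lamc ^ 2 - ε * D ^ 2 = 0)
      ∧ (∀ lamc' : ℝ,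
          (0 < lamc' ∧ 4 * ρ * K * lamc' ^ 4 - D ^ 2 * lamc' ^ 2 - ε * D ^ 2 = 0)
          → lamc' = lamc)
      ∧ (∀ lam : ℝ, 0 < lam →
          (0 < K / (ρ * (1 + ε / lam ^ 2)) - D ^ 2 / (4 * ρ ^ 2 * lam ^ 2)
            ↔ lamc < lam)) := by
  obtain ⟨c, hc, hcr⟩ : ∃ c : ℝ, 0 < c ∧
      4 * ρ * K * c ^ 4 - D ^ 2 * c ^ 2 - ε * D ^ 2 = 0 := by
    have hdisc : 0 ≤ D ^ 4 + 16 * ρ * K * ε * D ^ 2 := by positivity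
    have hr := Real.sq_sqrt hdisc
    have hr0 := Real.sqrt_nonneg (D ^ 4 + 16 * ρ * K * ε * D ^ 2)
    set r := Real.sqrt (D ^ 4 + 16 * ρ * K * ε * D ^ 2)
    have hs : 0 < (D ^ 2 + r) / (8 * ρ * K) := by positivity
    refine ⟨Real.sqrt ((D ^ 2 + r) / (8 * ρ * K)), Real.sqrt_pos.2 hs, ?_⟩
    have h2 := Real.sq_sqrt hs.le
    have h4 : Real.sqrt ((D ^ 2 + r) / (8 * ρ * K)) ^ 4 = ((D ^ 2 + r) / (8 * ρ * K)) ^ 2 := by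
      rw [← h2, ← pow_mul, h2]
    rw [h4, h2]
    field_simp
    linear_combination 4 * hr
  have hfac : ∀ x : ℝ, 4 * ρ * K * x ^ 4 - D ^ 2 * x ^ 2 - ε * D ^ 2
      = (x - c) * ((x + c) * (4 * ρ * K * (x ^ 2 + c ^ 2) - D ^ 2)) := by
    intro x
    linear_combination hcr
  have hge : 0 ≤ 4 * ρ * K * c ^ 2 - D ^ 2 := by
    have h : 0 ≤ (4 * ρ * K * c ^ 2 - D ^ 2) * c ^ 2 := by
      have : 0 ≤ ε * D ^ 2 := by positivity
      linarith [hcr]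
    exact nonneg_of_mul_nonneg_left h (by positivity)
  have hpos : ∀ x : ℝ, 0 < x → 0 < (x + c) * (4 * ρ * K * (x ^ 2 + c ^ 2) - D ^ 2) := by
    intro x hx
    have h1 : 0 < 4 * ρ * K * x ^ 2 := by positivity
    exact mul_pos (by positivity) (by linarith)
  refine ⟨c, ⟨hc, hcr⟩, ?_, ?_⟩
  · rintro x ⟨hx, hxr⟩
    rw [hfac x] at hxr
    rcases mul_eq_zero.1 hxr with h | h
    · linarith
    · exact absurd h (hpos x hx).ne'
  · intro x hx
    have hE : K / (ρ * (1 + ε / x ^ 2)) - D ^ 2 / (4 * ρ ^ 2 * x ^ 2)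
        = (4 * ρ * K * x ^ 4 - D ^ 2 * x ^ 2 - ε * D ^ 2)
          / (4 * ρ ^ 2 * x ^ 2 * (x ^ 2 + ε)) := by
      have h1 : x ^ 2 + ε ≠ 0 := by positivity
      have h2 : 1 + ε / x ^ 2 = (x ^ 2 + ε) / x ^ 2 := by field_simp
      rw [h2]
      field_simp
      ring
    have hden : 0 < 4 * ρ ^ 2 * x ^ 2 * (x ^ 2 + ε) := by positivity
    rw [hE, div_pos_iff_of_pos_right hden, hfac x, mul_pos_iff_of_pos_right (hpos x hx), sub_pos]
end

section
/- Let ρ, K > 0, D ≥ 0, ℓ ≥ 0 and λ > 0 be real numbers, and assume K/ρ + ℓ²K/(ρλ²) − D²/(4ρ²λ²) > 0. Let ω > 0 and γ ∈ ℝ. Then the Kramers–Kronig relations ρ(ω² − γ²) = K/λ² + ℓ²K/λ⁴ − Dγ/λ² and 2ργ = D/λ² hold if and only if γ = D/(2ρλ²) and the phase velocity v = ωλ satisfies v = sqrt( K/ρ + ℓ²K/(ρλ²) − D²/(4ρ²λ²) ). -/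
/-- Under the positivity assumption, the Kramers–Kronig relations
`ρ(ω² − γ²) = K/λ² + ℓ²K/λ⁴ − Dγ/λ²` and `2ργ = D/λ²` hold iff `γ = D/(2ρλ²)` and
the phase velocity `v = ωλ` equals `sqrt(K/ρ + ℓ²K/(ρλ²) − D²/(4ρ²λ²))`. -/
theorem stmt13 (ρ K D ℓ lam ω γ : ℝ)
    (hρ : 0 < ρ) (hK : 0 < K) (hD : 0 ≤ D) (hℓ : 0 ≤ ℓ) (hlam : 0 < lam)
    (hpos : 0 < K / ρ + ℓ ^ 2 * K / (ρ * lam ^ 2) - D ^ 2 / (4 * ρ ^ 2 * lam ^ 2))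
    (hω : 0 < ω) :
    (ρ * (ω ^ 2 - γ ^ 2) = K / lam ^ 2 + ℓ ^ 2 * K / lam ^ 4 - D * γ / lam ^ 2
        ∧ 2 * ρ * γ = D / lam ^ 2)
    ↔ (γ = D / (2 * ρ * lam ^ 2)
        ∧ ω * lam = Real.sqrt (K / ρ + ℓ ^ 2 * K / (ρ * lam ^ 2)
            - D ^ 2 / (4 * ρ ^ 2 * lam ^ 2))) := by
  have h2 : 2 * ρ * γ = D / lam ^ 2 ↔ D = 2 * ρ * γ * lam ^ 2 := by
    rw [eq_div_iff (by positivity)]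
    exact eq_comm
  have h3 : γ = D / (2 * ρ * lam ^ 2) ↔ D = 2 * ρ * γ * lam ^ 2 := by
    rw [eq_div_iff (by positivity)]
    constructor <;> intro h <;> linarith
  rw [h2, h3, and_comm]
  refine and_congr_right fun hDe => ?_
  rw [eq_comm (a := ω * lam), Real.sqrt_eq_iff_mul_self_eq hpos.le (by positivity)]
  have key : ω * lam * (ω * lam) - (K / ρ + ℓ ^ 2 * K / (ρ * lam ^ 2)
      - D ^ 2 / (4 * ρ ^ 2 * lam ^ 2)) = lam ^ 2 / ρ *
      (ρ * (ω ^ 2 - γ ^ 2) - (K / lam ^ 2 + ℓ ^ 2 * K / lam ^ 4 - D * γ / lam ^ 2)) := by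
    rw [hDe]
    field_simp
    ring
  have hc : lam ^ 2 / ρ ≠ 0 := by positivity
  constructor
  · intro h
    rw [h, sub_self, mul_zero] at key
    linarith
  · intro h
    have h0 : lam ^ 2 / ρ * (ρ * (ω ^ 2 - γ ^ 2)
        - (K / lam ^ 2 + ℓ ^ 2 * K / lam ^ 4 - D * γ / lam ^ 2)) = 0 := by
      rw [← key]
      linarith
    have := (mul_eq_zero.mp h0).resolve_left hc
    linarith
end

section
/- Let ρ, D, K, H > 0 be constants and set ε = K/H. Let u, v, π : ℝ × ℝ → ℝ be smooth (C^∞) functions of (t,x) satisfying, at every point, ∂ₜu = v, the momentum equation ρ ∂ₜv − D ∂ₓ²v + ∂ₓπ = 0, and the Oskolkov-regularized constraint (1/K)∂ₜπ + ∂ₓv = (1/H)∂ₓ²π. Then at every point ∂ₜ[ ρ ∂ₜ²u − (D + ερ) ∂ₜ∂ₓ²u − K ∂ₓ²u + ε D ∂ₓ⁴u ] = 0, i.e. u satisfies the time derivative of the parabolic dispersive equation ρ ∂ₜ²u − (D+ερ) ∂ₜ∂ₓ²u − K ∂ₓ²u + εD ∂ₓ⁴u = 0. -/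
/-- partial derivative in the first (time) variable -/
noncomputable def pt (f : ℝ × ℝ → ℝ) (p : ℝ × ℝ) : ℝ := deriv (fun s => f (s, p.2)) p.1

/-- partial derivative in the second (space) variable -/
noncomputable def px (f : ℝ × ℝ → ℝ) (p : ℝ × ℝ) : ℝ := deriv (fun y => f (p.1, y)) p.2

theorem aux_pt_eq {f : ℝ × ℝ → ℝ} (hf : ContDiff ℝ (⊤ : ℕ∞) f) :
    pt f = fun p => fderiv ℝ f p (1, 0) := by
  funext p
  have h1 : HasFDerivAt f (fderiv ℝ f p) (p.1, p.2) :=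
    (hf.differentiable (by simp) p).hasFDerivAt
  have h2 : HasDerivAt (fun s : ℝ => (s, p.2)) ((1 : ℝ), (0 : ℝ)) p.1 :=
    (hasDerivAt_id p.1).prodMk (hasDerivAt_const p.1 p.2)
  exact (h1.comp_hasDerivAt p.1 h2).deriv

theorem aux_px_eq {f : ℝ × ℝ → ℝ} (hf : ContDiff ℝ (⊤ : ℕ∞) f) :
    px f = fun p => fderiv ℝ f p (0, 1) := by
  funext p
  have h1 : HasFDerivAt f (fderiv ℝ f p) (p.1, p.2) :=
    (hf.differentiable (by simp) p).hasFDerivAt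
  have h2 : HasDerivAt (fun s : ℝ => (p.1, s)) ((0 : ℝ), (1 : ℝ)) p.2 :=
    (hasDerivAt_const p.2 p.1).prodMk (hasDerivAt_id p.2)
  exact (h1.comp_hasDerivAt p.2 h2).deriv

theorem aux_fd {f : ℝ × ℝ → ℝ} (hf : ContDiff ℝ (⊤ : ℕ∞) f) :
    ContDiff ℝ (⊤ : ℕ∞) (fderiv ℝ f) :=
  hf.fderiv_right (by simp)

theorem aux_pt_smooth {f : ℝ × ℝ → ℝ} (hf : ContDiff ℝ (⊤ : ℕ∞) f) :
    ContDiff ℝ (⊤ : ℕ∞) (pt f) := by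
  rw [aux_pt_eq hf]
  exact (aux_fd hf).clm_apply contDiff_const

theorem aux_px_smooth {f : ℝ × ℝ → ℝ} (hf : ContDiff ℝ (⊤ : ℕ∞) f) :
    ContDiff ℝ (⊤ : ℕ∞) (px f) := by
  rw [aux_px_eq hf]
  exact (aux_fd hf).clm_apply contDiff_const

theorem aux_comm {f : ℝ × ℝ → ℝ} (hf : ContDiff ℝ (⊤ : ℕ∞) f) :
    pt (px f) = px (pt f) := by
  rw [aux_pt_eq (aux_px_smooth hf), aux_px_eq (aux_pt_smooth hf), aux_px_eq hf, aux_pt_eq hf]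
  funext p
  have hd : DifferentiableAt ℝ (fderiv ℝ f) p := (aux_fd hf).differentiable (by simp) p
  have hs : IsSymmSndFDerivAt ℝ f p := hf.contDiffAt.isSymmSndFDerivAt (by
    simp only [minSmoothness_of_isRCLikeNormedField]
    exact WithTop.coe_le_coe.2 (le_top : (2 : ℕ∞) ≤ ⊤))
  rw [fderiv_clm_apply hd (differentiableAt_const _),
    fderiv_clm_apply hd (differentiableAt_const _)]
  simpa using hs (1, 0) (0, 1)

theorem aux_pt_lin {f g : ℝ × ℝ → ℝ} (hf : ContDiff ℝ (⊤ : ℕ∞) f)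
    (hg : ContDiff ℝ (⊤ : ℕ∞) g) (a b : ℝ) :
    pt (fun q => a * f q + b * g q) = fun q => a * pt f q + b * pt g q := by
  rw [aux_pt_eq ((contDiff_const.mul hf).add (contDiff_const.mul hg)), aux_pt_eq hf, aux_pt_eq hg]
  funext p
  have h1 := (hf.differentiable (by simp) p).hasFDerivAt.const_mul a
  have h2 := (hg.differentiable (by simp) p).hasFDerivAt.const_mul b
  rw [(h1.fun_add h2).fderiv]
  simp

theorem aux_px_lin {f g : ℝ × ℝ → ℝ} (hf : ContDiff ℝ (⊤ : ℕ∞) f)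
    (hg : ContDiff ℝ (⊤ : ℕ∞) g) (a b : ℝ) :
    px (fun q => a * f q + b * g q) = fun q => a * px f q + b * px g q := by
  rw [aux_px_eq ((contDiff_const.mul hf).add (contDiff_const.mul hg)), aux_px_eq hf, aux_px_eq hg]
  funext p
  have h1 := (hf.differentiable (by simp) p).hasFDerivAt.const_mul a
  have h2 := (hg.differentiable (by simp) p).hasFDerivAt.const_mul b
  rw [(h1.fun_add h2).fderiv]
  simp

/-- If smooth `u, v, π` satisfy `∂ₜu = v`,
`ρ ∂ₜv − D ∂ₓ²v + ∂ₓπ = 0` and `(1/K)∂ₜπ + ∂ₓv = (1/H)∂ₓ²π` everywhere, then with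
`ε = K/H` the time derivative of the parabolic dispersive equation holds:
`∂ₜ[ρ ∂ₜ²u − (D + ερ) ∂ₜ∂ₓ²u − K ∂ₓ²u + εD ∂ₓ⁴u] = 0` everywhere. -/
theorem stmt15 (ρ D K H ε : ℝ) (hρ : 0 < ρ) (hD : 0 < D) (hK : 0 < K) (hH : 0 < H)
    (hε : ε = K / H)
    (u v π : ℝ × ℝ → ℝ)
    (hu : ContDiff ℝ (⊤ : ℕ∞) u) (hv : ContDiff ℝ (⊤ : ℕ∞) v) (hπ : ContDiff ℝ (⊤ : ℕ∞) π)
    (huv : ∀ p : ℝ × ℝ, pt u p = v p)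
    (hmom : ∀ p : ℝ × ℝ, ρ * pt v p - D * px (px v) p + px π p = 0)
    (hconst : ∀ p : ℝ × ℝ, (1 / K) * pt π p + px v p = (1 / H) * px (px π) p) :
    ∀ p : ℝ × ℝ,
      pt (fun q => ρ * pt (pt u) q - (D + ε * ρ) * pt (px (px u)) q
        - K * px (px u) q + ε * D * px (px (px (px u))) q) p = 0 := by
  have hKne : K ≠ 0 := hK.ne'
  have hHne : H ≠ 0 := hH.ne'
  have eu : pt u = v := funext huv
  have su1 := aux_px_smooth hu
  have su2 := aux_px_smooth su1
  have su3 := aux_px_smooth su2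
  have su4 := aux_px_smooth su3
  have sv1 := aux_px_smooth hv
  have sv2 := aux_px_smooth sv1
  have sv3 := aux_px_smooth sv2
  have svt := aux_pt_smooth hv
  have sp1 := aux_px_smooth hπ
  have sp2 := aux_px_smooth sp1
  have eP : px π = fun q => D * px (px v) q + (-ρ) * pt v q := by
    funext q
    linarith [hmom q]
  have eQ : pt π = fun q => ε * px (px π) q + (-K) * px v q := by
    funext q
    have h := hconst q
    rw [hε]
    field_simp at h ⊢
    linarith
  have c2 : pt (px (px v)) = px (px (pt v)) := by
    rw [aux_comm sv1, aux_comm hv]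
  have e1 : pt (px π) = fun q => D * px (px (pt v)) q + (-ρ) * pt (pt v) q := by
    rw [eP, aux_pt_lin sv2 svt, c2]
  have e2 : px (pt π) = fun q => ε * px (px (px π)) q + (-K) * px (px v) q := by
    rw [eQ, aux_px_lin sp2 sv1]
  have e3 : px (px (px π))
      = fun q => D * px (px (px (px v))) q + (-ρ) * px (px (pt v)) q := by
    rw [eP, aux_px_lin sv2 svt, aux_px_lin sv3 (aux_px_smooth svt)]
  have d2 : pt (px (px u)) = px (px v) := by
    rw [aux_comm su1, aux_comm hu, eu]
  have d4 : pt (px (px (px (px u)))) = px (px (px (px v))) := by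
    rw [aux_comm su3, aux_comm su2, d2]
  intro p
  have hfun : (fun q => ρ * pt (pt u) q - (D + ε * ρ) * pt (px (px u)) q
        - K * px (px u) q + ε * D * px (px (px (px u))) q)
      = fun q => 1 * (fun q => ρ * pt v q + (-(D + ε * ρ)) * px (px v) q) q
        + 1 * (fun q => (-K) * px (px u) q + (ε * D) * px (px (px (px u))) q) q := by
    funext q
    rw [eu, d2]
    ring
  rw [hfun, aux_pt_lin ((contDiff_const.mul svt).add (contDiff_const.mul sv2))
    ((contDiff_const.mul su2).add (contDiff_const.mul su4)),
    aux_pt_lin svt sv2, aux_pt_lin su2 su4, d2, d4, c2]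
  have h := congrFun (aux_comm hπ) p
  rw [e1, e2, e3] at h
  simp only at h ⊢
  linarith
end

section
/- Let ρ, K > 0, D ≥ 0, ε ≥ 0 and λ > 0 be real numbers, and assume K/ρ − (D − ερ)²/(4ρ²λ²) > 0. Let ω > 0 and γ ∈ ℝ. Then the Kramers–Kronig relations ρ(ω² − γ²) = K/λ² + εD/λ⁴ − (D + ερ)γ/λ² and 2ργ = (D + ερ)/λ² hold if and only if γ = (D + ερ)/(2ρλ²) and the phase velocity v = ωλ satisfies v = sqrt( K/ρ − (D − ερ)²/(4ρ²λ²) ). -/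
/-- Under the positivity assumption, the Kramers–Kronig relations
`ρ(ω² − γ²) = K/λ² + εD/λ⁴ − (D + ερ)γ/λ²` and `2ργ = (D + ερ)/λ²` hold iff
`γ = (D + ερ)/(2ρλ²)` and the phase velocity `v = ωλ` equals
`sqrt(K/ρ − (D − ερ)²/(4ρ²λ²))`. -/
theorem stmt17 (ρ K D ε lam ω γ : ℝ)
    (hρ : 0 < ρ) (hK : 0 < K) (hD : 0 ≤ D) (hε : 0 ≤ ε) (hlam : 0 < lam)
    (hpos : 0 < K / ρ - (D - ε * ρ) ^ 2 / (4 * ρ ^ 2 * lam ^ 2))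
    (hω : 0 < ω) :
    (ρ * (ω ^ 2 - γ ^ 2) = K / lam ^ 2 + ε * D / lam ^ 4 - (D + ε * ρ) * γ / lam ^ 2
        ∧ 2 * ρ * γ = (D + ε * ρ) / lam ^ 2)
    ↔ (γ = (D + ε * ρ) / (2 * ρ * lam ^ 2)
        ∧ ω * lam = Real.sqrt (K / ρ - (D - ε * ρ) ^ 2 / (4 * ρ ^ 2 * lam ^ 2))) := by
  have hγ : 2 * ρ * γ = (D + ε * ρ) / lam ^ 2 ↔ γ = (D + ε * ρ) / (2 * ρ * lam ^ 2) := by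
    rw [eq_div_iff (by positivity), eq_div_iff (by positivity)]
    constructor <;> intro h <;> linarith
  rw [hγ, and_comm]
  refine and_congr_right fun h => ?_
  have key : ρ * (ω ^ 2 - γ ^ 2)
      - (K / lam ^ 2 + ε * D / lam ^ 4 - (D + ε * ρ) * γ / lam ^ 2)
      = ρ / lam ^ 2 *
        ((ω * lam) ^ 2 - (K / ρ - (D - ε * ρ) ^ 2 / (4 * ρ ^ 2 * lam ^ 2))) := by
    rw [h]
    field_simp
    ring
  have hc : ρ / lam ^ 2 ≠ 0 := by positivity
  have hv : 0 ≤ ω * lam := by positivity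
  rw [← sub_eq_zero, key, mul_eq_zero, or_iff_right hc, sub_eq_zero]
  constructor
  · intro h1
    rw [← h1, Real.sqrt_sq hv]
  · intro h1
    rw [h1, Real.sq_sqrt hpos.le]
end
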